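/- Under the Abaffian recursion carried out through step i−1 (so that wⱼᵀ Hⱼ Aᵀ vⱼ ≠ 0 for j = 1,…,i−1), the vector H_i Aᵀ v_i is zero if and only if Aᵀ v_i belongs to the linear span of Aᵀ v₁, …, Aᵀ v_{i−1}. In particular, in the basic ABS class where vⱼ = eⱼ is the j-th unit vector of ℝ^m, H_i a_i = 0 if and only if the i-th row a_i of A is a linear combination of the rows a₁,…,a_{i−1}. -/

import Mathlib

open Matrix

/-! With `a = Aᵀ v`, one step of the recursion replaces `H` by `P H`, where
`P = I - (H a) wᵀ / (wᵀ H a)` is the projection along the line through `H a`. The kernel of `P H`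
is the preimage under `H` of that line, namely `ker H + span {a}`. So each step adjoins one vector
`Aᵀ vⱼ` to the kernel, starting from `ker H₁ = 0`. -/

section LinearMap

variable {R M N : Type*} [Ring R] [AddCommGroup M] [Module R M] [AddCommGroup N] [Module R N]

theorem ker_id_sub_smulRight {φ : N →ₗ[R] R} {y : N} (hφ : φ y = 1) :
    LinearMap.ker (LinearMap.id - φ.smulRight y) = R ∙ y := by
  have hidem : IsIdempotentElem (φ.smulRight y) := LinearMap.ext fun z => by
    simp only [Module.End.mul_apply, LinearMap.smulRight_apply, map_smul, hφ, one_smul]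
  have hsurj : Function.Surjective φ := fun c => ⟨c • y, by rw [map_smul, hφ, smul_eq_mul, mul_one]⟩
  rw [← LinearMap.range_smulRight_apply_of_surjective hsurj y]
  exact (LinearMap.IsIdempotentElem.range_eq_ker_one_sub hidem).symm

theorem ker_id_sub_smulRight_comp (f : M →ₗ[R] N) {φ : N →ₗ[R] R} {x : M} (hφ : φ (f x) = 1) :
    LinearMap.ker ((LinearMap.id - φ.smulRight (f x)) ∘ₗ f) = LinearMap.ker f ⊔ R ∙ x := by
  rw [LinearMap.ker_comp, ker_id_sub_smulRight hφ, ← Set.image_singleton, ← Submodule.map_span,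
    Submodule.comap_map_eq, sup_comm]

end LinearMap

theorem eq_sup_span_image_of_succ_eq_sup_span_singleton {R M : Type*} [Semiring R]
    [AddCommMonoid M] [Module R M] {m k : ℕ} (S : ℕ → Submodule R M) (a : Fin m → M)
    (hk : k ≤ m) (hS : ∀ j : Fin m, (j : ℕ) < k → S (j + 1) = S j ⊔ R ∙ a j) :
    S k = S 0 ⊔ Submodule.span R (a '' {j | (j : ℕ) < k}) := by
  induction k with
  | zero => simp
  | succ k ih =>
    have hlast : {j : Fin m | (j : ℕ) < k + 1} = insert ⟨k, hk⟩ {j : Fin m | (j : ℕ) < k} := by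
      ext j
      simp only [Set.mem_ofPred_eq, Set.mem_insert_iff, Fin.ext_iff]
      omega
    rw [hS ⟨k, hk⟩ k.lt_succ_self, ih (by omega) fun j hj => hS j (by omega), hlast,
      Set.image_insert_eq, Submodule.span_insert, sup_assoc, sup_comm (Submodule.span R _)]

section Abaffian

variable {K ι κ : Type*} [Field K] [Fintype ι] [Fintype κ]

/-- One step of the Abaffian recursion: the rank-one update of `H` that adjoins `a` to its kernel,
with parameter `w`; the ABS algorithm takes `a = Aᵀ v`. For `wᵀ H a = 0`, where the recursion breaks
down, the convention `0⁻¹ = 0` makes the value `H`. -/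
def abaffianUpdate (H : Matrix κ ι K) (a : ι → K) (w : κ → K) : Matrix κ ι K :=
  H - (w ⬝ᵥ (H *ᵥ a))⁻¹ • vecMulVec (H *ᵥ a) (w ᵥ* H)

theorem mulVecLin_abaffianUpdate (H : Matrix κ ι K) (a : ι → K) (w : κ → K) :
    (abaffianUpdate H a w).mulVecLin =
      (LinearMap.id - ((w ⬝ᵥ (H *ᵥ a))⁻¹ • dotProductBilin K K w).smulRight (H.mulVecLin a)) ∘ₗ
        H.mulVecLin := by
  refine LinearMap.ext fun x => ?_
  simp only [abaffianUpdate, mulVecLin_apply, sub_mulVec, smul_mulVec, vecMulVec_mulVec,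
    ← dotProduct_mulVec, op_smul_eq_smul, smul_smul, LinearMap.comp_apply, LinearMap.sub_apply,
    LinearMap.id_apply, LinearMap.smulRight_apply, LinearMap.smul_apply,
    dotProductBilin_apply_apply, smul_eq_mul]

theorem ker_mulVecLin_abaffianUpdate {H : Matrix κ ι K} {a : ι → K} {w : κ → K}
    (hw : w ⬝ᵥ (H *ᵥ a) ≠ 0) :
    LinearMap.ker (abaffianUpdate H a w).mulVecLin = LinearMap.ker H.mulVecLin ⊔ K ∙ a := by
  rw [mulVecLin_abaffianUpdate]
  exact ker_id_sub_smulRight_comp _ (inv_mul_cancel₀ hw)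

theorem ker_mulVecLin_eq_sup_span_of_succ_eq_abaffianUpdate {m k : ℕ} (H : ℕ → Matrix κ ι K)
    (a : Fin m → ι → K) (w : Fin m → κ → K) (hk : k ≤ m)
    (hw : ∀ j : Fin m, (j : ℕ) < k → w j ⬝ᵥ (H j *ᵥ a j) ≠ 0)
    (hH : ∀ j : Fin m, (j : ℕ) < k → H (j + 1) = abaffianUpdate (H j) (a j) (w j)) :
    LinearMap.ker (H k).mulVecLin =
      LinearMap.ker (H 0).mulVecLin ⊔ Submodule.span K (a '' {j | (j : ℕ) < k}) :=
  eq_sup_span_image_of_succ_eq_sup_span_singleton (fun k => LinearMap.ker (H k).mulVecLin) a hk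
    fun j hj => by rw [hH j hj, ker_mulVecLin_abaffianUpdate (hw j hj)]

theorem abaffian_kernel_characterization_general {m : ℕ}
    (A : Matrix (Fin m) ι K) (H : ℕ → Matrix κ ι K)
    (v : Fin m → Fin m → K) (w : Fin m → κ → K) (i : Fin m)
    (hHden : ∀ j : Fin m, j < i → w j ⬝ᵥ (H ↑j *ᵥ (Aᵀ *ᵥ v j)) ≠ 0)
    (hH : ∀ j : Fin m, j < i → H (↑j + 1) = abaffianUpdate (H ↑j) (Aᵀ *ᵥ v j) (w j)) :
    (H ↑i *ᵥ (Aᵀ *ᵥ v i) = 0 ↔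
      Aᵀ *ᵥ v i ∈ LinearMap.ker (H 0).mulVecLin ⊔
        Submodule.span K {u : ι → K | ∃ j : Fin m, j < i ∧ u = Aᵀ *ᵥ v j}) ∧
    ((∀ j : Fin m, v j = Pi.single j 1) →
      (H ↑i *ᵥ A i = 0 ↔
        A i ∈ LinearMap.ker (H 0).mulVecLin ⊔
          Submodule.span K {u : ι → K | ∃ j : Fin m, j < i ∧ u = A j})) := by
  have hker : LinearMap.ker (H i).mulVecLin = LinearMap.ker (H 0).mulVecLin ⊔
      Submodule.span K {u : ι → K | ∃ j : Fin m, j < i ∧ u = Aᵀ *ᵥ v j} := by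
    simpa only [Set.image, Set.mem_ofPred_eq, Fin.val_fin_lt, eq_comm] using
      ker_mulVecLin_eq_sup_span_of_succ_eq_abaffianUpdate H (fun j => Aᵀ *ᵥ v j) w i.is_le' hHden hH
  have hmem (x : ι → K) : H i *ᵥ x = 0 ↔ x ∈ LinearMap.ker (H 0).mulVecLin ⊔
      Submodule.span K {u : ι → K | ∃ j : Fin m, j < i ∧ u = Aᵀ *ᵥ v j} := by
    rw [← hker, LinearMap.mem_ker, mulVecLin_apply]
  refine ⟨hmem _, fun hv => ?_⟩
  have hrow (j : Fin m) : Aᵀ *ᵥ v j = A j := by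
    rw [hv j, mulVec_single_one, col_transpose, row]
  simpa only [hrow] using hmem (A i)

end Abaffian

/-- Under the Abaffian recursion carried out through step `i−1` (here 0-indexed:
`H 0 = H₁` and the recursion hypotheses hold for all steps `j < i`), the vector
`H_i Aᵀ v_i` is zero iff `Aᵀ v_i` lies in the span of `Aᵀ v₁, …, Aᵀ v_{i−1}`.
In particular, in the basic ABS class where `vⱼ = eⱼ`, `H_i a_i = 0` iff the
`i`-th row `a_i` of `A` is a linear combination of the rows `a₁,…,a_{i−1}`. -/
theorem abaffian_kernel_characterization
    (m n : ℕ) (hmn : m ≤ n)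
    (A : Matrix (Fin m) (Fin n) ℝ)
    (H : ℕ → Matrix (Fin n) (Fin n) ℝ)
    (v : Fin m → Fin m → ℝ) (w : Fin m → Fin n → ℝ)
    (i : Fin m)
    (hH0 : IsUnit (H 0).det)
    (hHden : ∀ j : Fin m, j < i → w j ⬝ᵥ (H ↑j *ᵥ (Aᵀ *ᵥ v j)) ≠ 0)
    (hH : ∀ j : Fin m, j < i →
      H (↑j + 1) = H ↑j -
        (w j ⬝ᵥ (H ↑j *ᵥ (Aᵀ *ᵥ v j)))⁻¹ •
          vecMulVec (H ↑j *ᵥ (Aᵀ *ᵥ v j)) (w j ᵥ* H ↑j)) :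
    (H ↑i *ᵥ (Aᵀ *ᵥ v i) = 0 ↔
      Aᵀ *ᵥ v i ∈ Submodule.span ℝ {u : Fin n → ℝ | ∃ j : Fin m, j < i ∧ u = Aᵀ *ᵥ v j}) ∧
    ((∀ j : Fin m, v j = Pi.single j 1) →
      (H ↑i *ᵥ A i = 0 ↔
        A i ∈ Submodule.span ℝ {u : Fin n → ℝ | ∃ j : Fin m, j < i ∧ u = A j})) := by
  have hker : LinearMap.ker (H 0).mulVecLin = ⊥ :=
    LinearMap.ker_eq_bot.2 (mulVec_injective_of_isUnit ((isUnit_iff_isUnit_det _).2 hH0))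
  simpa only [hker, bot_sup_eq] using abaffian_kernel_characterization_general A H v w i hHden hH
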